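/- For every k ≥ 1, every k-tuple (r_1, …, r_k) of elements of ROQ(ℝ³) satisfies an L_{conv,≤}-formula φ(x_1, …, x_k) with the following property: for any two k-tuples (s_1, …, s_k) and (s'_1, …, s'_k) of elements of ROQ(ℝ³) satisfying φ in 𝔐³, there exists an affine transformation τ of ℝ³ with τ(s_i) = s'_i for all i = 1, …, k. -/

import Mathlib

open FirstOrder

/-- A rational open half-space in ℝ^n: `{x | c·x < d}` with `c ∈ ℚ^n` nonzero, `d ∈ ℚ`. -/
def IsRatHalfSpace (n : ℕ) (s : Set (Fin n → ℝ)) : Prop :=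
  ∃ (c : Fin n → ℚ) (d : ℚ), c ≠ 0 ∧
    s = {x : Fin n → ℝ | (∑ i, (c i : ℝ) * x i) < (d : ℝ)}

/-- Membership in the Boolean subalgebra `ROQ(ℝ^n)` of the Boolean algebra of regular open
sets generated by the rational open half-spaces, with Boolean operations
`a·b = a ∩ b`, `a + b = int(cl(a ∪ b))`, `-a = int(ℝ^n ∖ a)`, `0 = ∅`, `1 = univ`. -/
inductive InROQ (n : ℕ) : Set (Fin n → ℝ) → Prop
  | bot : InROQ n ∅
  | top : InROQ n Set.univ
  | halfspace (s : Set (Fin n → ℝ)) : IsRatHalfSpace n s → InROQ n s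
  | inf (s t : Set (Fin n → ℝ)) : InROQ n s → InROQ n t → InROQ n (s ∩ t)
  | sup (s t : Set (Fin n → ℝ)) : InROQ n s → InROQ n t →
      InROQ n (interior (closure (s ∪ t)))
  | compl (s : Set (Fin n → ℝ)) : InROQ n s → InROQ n (interior sᶜ)

/-- `ROQ(ℝ^n)` as a set of subsets of ℝ^n. -/
def ROQ (n : ℕ) : Set (Set (Fin n → ℝ)) := {s | InROQ n s}

/-- The domain of the structure 𝔐^n: the regular open rational polytopes. -/
def ROQel (n : ℕ) : Type := {s : Set (Fin n → ℝ) // InROQ n s}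

/-- Relation symbols of the language L_{conv,≤}: one unary (`conv`), one binary (`≤`). -/
def LconvRel : ℕ → Type
  | 1 => Unit
  | 2 => Unit
  | _ => Empty

/-- The first-order language L_{conv,≤} with no function symbols, a unary relation symbol
`conv` and a binary relation symbol `≤`. -/
def Lconv : Language := ⟨fun _ => Empty, LconvRel⟩

/-- The structure 𝔐^n: domain ROQ(ℝ^n), `≤` interpreted as inclusion and `conv`
as convexity. -/
instance MStructure (n : ℕ) : Lconv.Structure (ROQel n) where
  funMap := fun f _ => f.elim
  RelMap := fun {k} r v =>
    match k, r, v with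
    | 1, _, v => Convex ℝ (v 0).1
    | 2, _, v => (v 0).1 ⊆ (v 1).1
    | 0, r, _ => r.elim
    | (_ + 3), r, _ => r.elim

/-- An affine transformation of ℝ^n: x ↦ Ax + b with A an invertible n×n real matrix. -/
def IsAffineEquiv (n : ℕ) (f : (Fin n → ℝ) → (Fin n → ℝ)) : Prop :=
  ∃ (A : Matrix (Fin n) (Fin n) ℝ) (b : Fin n → ℝ),
    IsUnit A.det ∧ ∀ x, f x = A.mulVec x + b


namespace AffC

abbrev E := Fin 3 → ℝ
abbrev M := ROQel 3

/-- First-order definable relations on tuples. -/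
def Dfn {α : Type} (R : (α → M) → Prop) : Prop :=
  ∃ φ : Lconv.Formula α, ∀ v, φ.Realize v ↔ R v

variable {α : Type}

theorem Dfn.le (i j : α) : Dfn (fun v => (v i).1 ⊆ (v j).1) :=
  ⟨(show Lconv.Relations 2 from ()).formula₂ (Language.Term.var i) (Language.Term.var j), fun v => by
    rw [Language.Formula.realize_rel₂]; rfl⟩

theorem Dfn.conv (i : α) : Dfn (fun v => Convex ℝ (v i).1) :=
  ⟨(show Lconv.Relations 1 from ()).formula₁ (Language.Term.var i), fun v => by
    rw [Language.Formula.realize_rel₁]; rfl⟩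

theorem Dfn.congr {R S : (α → M) → Prop} (h : Dfn R) (e : ∀ v, R v ↔ S v) : Dfn S := by
  obtain ⟨φ, hφ⟩ := h
  exact ⟨φ, fun v => (hφ v).trans (e v)⟩

theorem Dfn.not {R : (α → M) → Prop} (h : Dfn R) : Dfn (fun v => ¬ R v) := by
  obtain ⟨φ, hφ⟩ := h
  exact ⟨φ.not, fun v => by rw [Language.Formula.realize_not, hφ]⟩

theorem Dfn.and {R S : (α → M) → Prop} (h : Dfn R) (h' : Dfn S) : Dfn (fun v => R v ∧ S v) := by
  obtain ⟨φ, hφ⟩ := h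
  obtain ⟨ψ, hψ⟩ := h'
  exact ⟨φ ⊓ ψ, fun v => by rw [Language.Formula.realize_inf, hφ, hψ]⟩

theorem Dfn.or {R S : (α → M) → Prop} (h : Dfn R) (h' : Dfn S) : Dfn (fun v => R v ∨ S v) :=
  (h.not.and h'.not).not.congr fun v => by tauto

theorem Dfn.imp {R S : (α → M) → Prop} (h : Dfn R) (h' : Dfn S) : Dfn (fun v => R v → S v) :=
  (h.and h'.not).not.congr fun v => by tauto

theorem Dfn.forallFin {β : Type} [Finite β] {R : β → (α → M) → Prop} (h : ∀ b, Dfn (R b)) :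
    Dfn (fun v => ∀ b, R b v) := by
  choose φ hφ using h
  exact ⟨Language.Formula.iInf φ, fun v => by simp [Language.Formula.realize_iInf, hφ]⟩

theorem Dfn.comp {β : Type} {R : (α → M) → Prop} (h : Dfn R) (f : α → β) :
    Dfn (fun v : β → M => R (fun a => v (f a))) := by
  obtain ⟨φ, hφ⟩ := h
  exact ⟨φ.relabel f, fun v => by rw [Language.Formula.realize_relabel, hφ]; rfl⟩

theorem Dfn.exs {β : Type} [Finite β] {R : (α → M) → (β → M) → Prop}
    (h : Dfn (fun v : α ⊕ β → M => R (fun a => v (Sum.inl a)) (fun b => v (Sum.inr b)))) :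
    Dfn (fun v => ∃ w, R v w) := by
  obtain ⟨φ, hφ⟩ := h
  exact ⟨φ.iExs β, fun v => by rw [Language.Formula.realize_iExs]; simp [hφ]⟩

theorem Dfn.ex {R : (α → M) → M → Prop}
    (h : Dfn (fun v : Option α → M => R (fun a => v (some a)) (v none))) :
    Dfn (fun v => ∃ x, R v x) := by
  refine Dfn.congr (Dfn.exs (β := Unit) (R := fun v w => R v (w ()))
    (h.comp (fun o : Option α => o.elim (Sum.inr ()) Sum.inl))) fun v => ?_
  exact ⟨fun ⟨w, hw⟩ => ⟨_, hw⟩, fun ⟨x, hx⟩ => ⟨fun _ => x, hx⟩⟩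

theorem Dfn.all {R : (α → M) → M → Prop}
    (h : Dfn (fun v : Option α → M => R (fun a => v (some a)) (v none))) :
    Dfn (fun v => ∀ x, R v x) :=
  (Dfn.ex (R := fun v x => ¬ R v x) h.not).not.congr fun v => by simp

/-! ### basic set-level facts -/

theorem roq_reg {s : Set E} (h : InROQ 3 s) : interior (closure s) = s := by
  have key : ∀ t : Set E, interior (closure (interior (closure t))) = interior (closure t) := by
    intro t
    apply subset_antisymm
    · apply interior_mono
      exact closure_minimal interior_subset isClosed_closure
    · exact interior_maximal subset_closure isOpen_interior
  induction h with
  | bot => simp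
  | top => simp
  | halfspace s hs =>
    obtain ⟨c, d, hc, rfl⟩ := hs
    have hcl : closure {x : E | (∑ i, (c i : ℝ) * x i) < (d : ℝ)} ⊆ {x : E | (∑ i, (c i : ℝ) * x i) ≤ (d : ℝ)} :=
      closure_minimal (Set.ofPred_subset_ofPred.2 fun x hx => hx.le)
        (isClosed_le (by fun_prop) continuous_const)
    have hop : IsOpen {x : E | (∑ i, (c i : ℝ) * x i) < (d : ℝ)} :=
      isOpen_lt (by fun_prop) continuous_const
    apply subset_antisymm _ (interior_maximal subset_closure hop)
    intro x hx
    have h1 := mem_interior_iff_mem_nhds.1 hx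
    obtain ⟨i, hi⟩ := Function.ne_iff.1 hc
    have h2 : Filter.Tendsto (fun t : ℝ => x + t • (fun i => (c i : ℝ))) (nhdsWithin 0 (Set.Ioi 0)) (nhds x) := by
      have : Continuous (fun t : ℝ => x + t • (fun i => (c i : ℝ) : E)) := by fun_prop
      have h := this.tendsto 0
      simp only [zero_smul, add_zero] at h
      exact h.mono_left nhdsWithin_le_nhds
    obtain ⟨t, ht, ht0⟩ := ((h2.eventually h1).and self_mem_nhdsWithin).exists
    have h3 := hcl ht
    have ht0 : (0:ℝ) < t := ht0
    have h4 : 0 < ∑ i, (c i : ℝ) * c i :=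
      Finset.sum_pos' (fun i _ => mul_self_nonneg _)
        ⟨i, Finset.mem_univ _, by have : (c i : ℝ) ≠ 0 := by exact_mod_cast hi
                                  exact mul_self_pos.2 this⟩
    have h5 : ∑ i, (c i : ℝ) * (x + t • (fun i => (c i : ℝ) : E)) i = ∑ i, (c i : ℝ) * x i + t * ∑ i, (c i : ℝ) * c i := by
      rw [Finset.mul_sum, ← Finset.sum_add_distrib]
      refine Finset.sum_congr rfl fun i _ => ?_
      simp; ring
    have h6 : ∑ i, (c i : ℝ) * (x + t • (fun i => (c i : ℝ) : E)) i ≤ d := h3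
    have : 0 < t * ∑ i, (c i : ℝ) * c i := by positivity
    show ∑ i, (c i : ℝ) * x i < d
    linarith
  | inf s t _ _ hs ht =>
    apply subset_antisymm
    · apply Set.subset_inter
      · conv_rhs => rw [← hs]
        exact interior_mono (closure_mono Set.inter_subset_left)
      · conv_rhs => rw [← ht]
        exact interior_mono (closure_mono Set.inter_subset_right)
    · refine interior_maximal subset_closure (IsOpen.inter ?_ ?_)
      · rw [← hs]; exact isOpen_interior
      · rw [← ht]; exact isOpen_interior
  | sup s t _ _ _ _ => exact key _
  | compl s _ hs =>
    rw [interior_compl, closure_compl, interior_compl, hs]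

theorem roq_open {s : Set E} (h : InROQ 3 s) : IsOpen s := by
  rw [← roq_reg h]; exact isOpen_interior

/-! ### definable relations -/

theorem dEmpty (i : α) : Dfn (fun v => (v i).1 = ∅) := by
  refine Dfn.congr (Dfn.all (R := fun v x => (v i).1 ⊆ x.1) (Dfn.le _ _)) fun v => ?_
  exact ⟨fun h => Set.subset_eq_empty (h ⟨∅, .bot⟩) rfl, fun h x => by rw [h]; exact Set.empty_subset _⟩

theorem dUniv (i : α) : Dfn (fun v => (v i).1 = Set.univ) := by
  refine Dfn.congr (Dfn.all (R := fun v x => x.1 ⊆ (v i).1) (Dfn.le _ _)) fun v => ?_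
  exact ⟨fun h => Set.univ_subset_iff.1 (h ⟨_, .top⟩), fun h x => by rw [h]; exact Set.subset_univ _⟩

theorem dEq (i j : α) : Dfn (fun v => (v i).1 = (v j).1) :=
  ((Dfn.le i j).and (Dfn.le j i)).congr fun v => by rw [Set.Subset.antisymm_iff]

theorem dInf (i j k : α) : Dfn (fun v => (v k).1 = (v i).1 ∩ (v j).1) := by
  refine Dfn.congr (((Dfn.le k i).and (Dfn.le k j)).and (Dfn.all (R := fun v x => x.1 ⊆ (v i).1 → x.1 ⊆ (v j).1 → x.1 ⊆ (v k).1)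
    ((Dfn.le _ _).imp ((Dfn.le _ _).imp (Dfn.le _ _))))) fun v => ?_
  constructor
  · rintro ⟨⟨h1, h2⟩, h3⟩
    exact subset_antisymm (Set.subset_inter h1 h2)
      (h3 ⟨_, .inf _ _ (v i).2 (v j).2⟩ Set.inter_subset_left Set.inter_subset_right)
  · intro h
    rw [h]
    exact ⟨⟨Set.inter_subset_left, Set.inter_subset_right⟩, fun x h1 h2 => Set.subset_inter h1 h2⟩

theorem dInter (i j k : α) : Dfn (fun v => (v i).1 ∩ (v j).1 ⊆ (v k).1) := by
  refine Dfn.congr (Dfn.ex (R := fun v x => x.1 = (v i).1 ∩ (v j).1 ∧ x.1 ⊆ (v k).1)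
    ((dInf _ _ _).and (Dfn.le _ _))) fun v => ?_
  exact ⟨fun ⟨x, h1, h2⟩ => h1 ▸ h2, fun h => ⟨⟨_, .inf _ _ (v i).2 (v j).2⟩, rfl, h⟩⟩

theorem dCompl (i j : α) : Dfn (fun v => (v j).1 = interior (v i).1ᶜ) := by
  refine Dfn.congr (Dfn.all (R := fun v x => (x.1 ⊆ (v j).1 → ∃ y : M, y.1 = x.1 ∩ (v i).1 ∧ y.1 = ∅) ∧
      ((∃ y : M, y.1 = x.1 ∩ (v i).1 ∧ y.1 = ∅) → x.1 ⊆ (v j).1)) ?_) fun v => ?_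
  · exact ((Dfn.le _ _).imp (Dfn.ex ((dInf _ _ _).and (dEmpty _)))).and
      ((Dfn.ex ((dInf _ _ _).and (dEmpty _))).imp (Dfn.le _ _))
  · have h1 : ∀ x : M, (∃ y : M, y.1 = x.1 ∩ (v i).1 ∧ y.1 = ∅) ↔ x.1 ⊆ interior (v i).1ᶜ := by
      intro x
      rw [(roq_open x.2).subset_interior_iff, Set.subset_compl_iff_disjoint_right, Set.disjoint_iff_inter_eq_empty]
      exact ⟨fun ⟨y, h1, h2⟩ => h1 ▸ h2, fun h => ⟨⟨∅, .bot⟩, h.symm, rfl⟩⟩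
    simp only [h1]
    constructor
    · intro h
      exact subset_antisymm ((h (v j)).1 subset_rfl) ((h ⟨_, .compl _ (v i).2⟩).2 subset_rfl)
    · intro h x
      rw [h]; exact ⟨id, id⟩



/-! ### half-spaces -/

abbrev W := E × ℝ

def ev (w : W) (x : E) : ℝ := w.1 ⬝ᵥ x + w.2

def Hs (w : W) : Set E := {x | 0 < ev w x}

def IsHS (s : Set E) : Prop := ∃ w : W, w.1 ≠ 0 ∧ s = Hs w

theorem ev_cont (w : W) : Continuous (ev w) := by
  unfold ev dotProduct; fun_prop

theorem Hs_open (w : W) : IsOpen (Hs w) := isOpen_lt continuous_const (ev_cont w)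

theorem dot_self_pos {c : E} (h : c ≠ 0) : 0 < c ⬝ᵥ c := by
  have h1 : 0 ≤ c ⬝ᵥ c := Finset.sum_nonneg fun i _ => mul_self_nonneg _
  exact lt_of_le_of_ne h1 fun h2 => h (dotProduct_self_eq_zero.1 h2.symm)

theorem ev_add_smul (w : W) (x y : E) (t : ℝ) : ev w (x + t • y) = ev w x + t * (w.1 ⬝ᵥ y) := by
  simp [ev, dotProduct_add, dotProduct_smul]; ring

theorem int_le {w : W} (hw : w.1 ≠ 0) : interior {x | 0 ≤ ev w x} = Hs w := by
  apply subset_antisymm _ (interior_maximal (Set.ofPred_subset_ofPred.2 fun x hx => hx.le) (Hs_open w))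
  intro x hx
  have h1 := mem_interior_iff_mem_nhds.1 hx
  have h2 : Filter.Tendsto (fun t : ℝ => x + (-t) • w.1) (nhdsWithin 0 (Set.Ioi 0)) (nhds x) := by
    have : Continuous (fun t : ℝ => x + (-t) • w.1) := by fun_prop
    have h := this.tendsto 0
    simp only [neg_zero, zero_smul, add_zero] at h
    exact h.mono_left nhdsWithin_le_nhds
  obtain ⟨t, ht, ht0⟩ := ((h2.eventually h1).and self_mem_nhdsWithin).exists
  have ht0 : (0:ℝ) < t := ht0
  have ht : 0 ≤ ev w (x + (-t) • w.1) := ht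
  rw [ev_add_smul] at ht
  have := mul_pos ht0 (dot_self_pos hw)
  show 0 < ev w x
  linarith

theorem ev_neg (w : W) (x : E) : ev (-w) x = - ev w x := by simp [ev]; ring

theorem Hs_compl {w : W} (hw : w.1 ≠ 0) : interior (Hs w)ᶜ = Hs (-w) := by
  have h : (-w).1 ≠ 0 := by simpa using hw
  rw [← int_le h]
  congr 1
  ext x
  simp [Hs, ev_neg]

theorem Hs_convex (w : W) : Convex ℝ (Hs w) := by
  intro x hx y hy a b ha hb hab
  have h1 : 0 < ev w x := hx
  have h2 : 0 < ev w y := hy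
  show 0 < ev w _
  have : ev w (a • x + b • y) = a * ev w x + b * ev w y := by
    simp [ev, dotProduct_add, dotProduct_smul]
    linear_combination (-w.2) * hab
  rw [this]
  rcases ha.lt_or_eq with h | h
  · positivity
  · have : b = 1 := by linarith
    rw [← h, this]; simpa using h2

theorem Hs_nonempty {w : W} (hw : w.1 ≠ 0) : (Hs w).Nonempty := by
  have h := dot_self_pos hw
  refine ⟨0 + ((1 - w.2) / (w.1 ⬝ᵥ w.1)) • w.1, ?_⟩
  show 0 < ev w _
  rw [ev_add_smul, div_mul_cancel₀ _ h.ne']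
  simp [ev]

theorem lin_eq_dot (L : E →ₗ[ℝ] ℝ) (x : E) : L x = (fun j => L (Pi.single j 1)) ⬝ᵥ x := by
  rw [LinearMap.pi_apply_eq_sum_univ L x]
  simp only [dotProduct, smul_eq_mul]
  refine Finset.sum_congr rfl fun i _ => ?_
  rw [mul_comm]
  congr 2
  ext j
  simp [Pi.single_apply, eq_comm]

theorem isHS_iff (s : M) : (Convex ℝ s.1 ∧ Convex ℝ (interior s.1ᶜ) ∧ s.1 ≠ ∅ ∧ interior s.1ᶜ ≠ ∅) ↔
    IsHS s.1 := by
  constructor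
  · rintro ⟨h1, h2, h3, h4⟩
    obtain ⟨f, u, hf, hu⟩ := geometric_hahn_banach_open_open h1 (roq_open s.2) h2 isOpen_interior
      (Set.disjoint_left.2 fun x hx hx' => interior_subset hx' hx)
    obtain ⟨a, ha⟩ := Set.nonempty_iff_ne_empty.2 h3
    obtain ⟨b, hb⟩ := Set.nonempty_iff_ne_empty.2 h4
    have ha := hf a ha
    have hb := hu b hb
    let c : E := fun j => f (Pi.single j 1)
    have hc : ∀ x, f x = c ⬝ᵥ x := fun x => lin_eq_dot f.toLinearMap x
    have hev : ∀ x, ev (-c, u) x = u - f x := by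
      intro x; simp [ev, hc]; ring
    refine ⟨(-c, u), ?_, ?_⟩
    · intro h
      have h : c = 0 := by simpa using h
      rw [hc, h] at ha hb
      simp at ha hb
      linarith
    · apply subset_antisymm
      · intro x hx
        show 0 < ev _ x
        rw [hev]; linarith [hf x hx]
      · conv_rhs => rw [← roq_reg s.2]
        refine interior_maximal ?_ (Hs_open _)
        intro x hx
        have hx : 0 < ev _ x := hx
        rw [hev] at hx
        by_contra hn
        have : x ∈ interior s.1ᶜ := by rwa [interior_compl]
        linarith [hu x this]
  · rintro ⟨w, hw, h⟩
    rw [h, Hs_compl hw]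
    exact ⟨Hs_convex _, Hs_convex _, (Hs_nonempty hw).ne_empty, (Hs_nonempty (by simpa using hw)).ne_empty⟩

theorem dHS (i : α) : Dfn (fun v => IsHS (v i).1) := by
  refine Dfn.congr (Dfn.ex (R := fun v y => y.1 = interior (v i).1ᶜ ∧ Convex ℝ (v i).1 ∧ Convex ℝ y.1 ∧
    ¬ (v i).1 = ∅ ∧ ¬ y.1 = ∅)
    ((dCompl _ _).and ((Dfn.conv _).and ((Dfn.conv _).and ((dEmpty _).not.and (dEmpty _).not))))) fun v => ?_
  rw [← isHS_iff]
  constructor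
  · rintro ⟨y, h, h2⟩
    rwa [h] at h2
  · intro h
    exact ⟨⟨_, .compl _ (v i).2⟩, rfl, h⟩

def Col (a b h : Set E) : Prop := a ∩ b ⊆ h ∧ interior aᶜ ∩ interior bᶜ ⊆ interior hᶜ

theorem dCol (i j k : α) : Dfn (fun v => Col (v i).1 (v j).1 (v k).1) := by
  refine Dfn.congr ((dInter i j k).and (Dfn.ex (R := fun v a => ∃ b c : M, a.1 = interior (v i).1ᶜ ∧
    b.1 = interior (v j).1ᶜ ∧ c.1 = interior (v k).1ᶜ ∧ a.1 ∩ b.1 ⊆ c.1)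
    (Dfn.ex (Dfn.ex ((dCompl _ _).and ((dCompl _ _).and ((dCompl _ _).and (dInter _ _ _)))))))) fun v => ?_
  refine and_congr Iff.rfl ?_
  constructor
  · rintro ⟨a, b, c, h1, h2, h3, h4⟩
    rwa [h1, h2, h3] at h4
  · intro h
    exact ⟨⟨_, .compl _ (v i).2⟩, ⟨_, .compl _ (v j).2⟩, ⟨_, .compl _ (v k).2⟩, rfl, rfl, rfl, h⟩

theorem pre_int (σ : E ≃ᵃ[ℝ] E) (s : Set E) : σ ⁻¹' (interior s) = interior (σ ⁻¹' s) :=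
  (AffineEquiv.toContinuousAffineEquiv σ).toHomeomorph.preimage_interior s

theorem Col.pre (σ : E ≃ᵃ[ℝ] E) {a b h : Set E} (H : Col a b h) : Col (σ ⁻¹' a) (σ ⁻¹' b) (σ ⁻¹' h) := by
  refine ⟨fun x hx => H.1 hx, ?_⟩
  simp only [← Set.preimage_compl, ← pre_int]
  exact fun x hx => H.2 hx

theorem IsHS.pre (σ : E ≃ᵃ[ℝ] E) {s : Set E} (h : IsHS s) : IsHS (σ ⁻¹' s) := by
  obtain ⟨w, hw, rfl⟩ := h
  let L : E →ₗ[ℝ] ℝ := (dotProductBilin ℝ ℝ w.1) ∘ₗ σ.linear.toLinearMap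
  have hL : ∀ x, L x = w.1 ⬝ᵥ σ.linear x := fun x => rfl
  refine ⟨(fun j => L (Pi.single j 1), ev w (σ 0)), ?_, ?_⟩
  · intro h
    apply hw
    have h : (fun j => L (Pi.single j 1)) = 0 := h
    obtain ⟨y, hy⟩ := σ.linear.surjective w.1
    have := lin_eq_dot L y
    rw [h, hL, hy, zero_dotProduct] at this
    exact dotProduct_self_eq_zero.1 this
  · ext x
    have h1 : σ x = σ.linear x + σ 0 := by
      have := σ.map_vadd 0 x
      simpa using this
    show 0 < ev w (σ x) ↔ 0 < ev _ x
    have h2 : ev (fun j => L (Pi.single j 1), ev w (σ 0)) x = ev w (σ x) := by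
      show (fun j => L (Pi.single j 1)) ⬝ᵥ x + ev w (σ 0) = _
      rw [← lin_eq_dot, hL, h1]
      simp only [ev, dotProduct_add]
      ring
    rw [h2]

def NonPar (f g : W) : Prop := ∀ α β : ℝ, α • f.1 + β • g.1 = 0 → α = 0 ∧ β = 0

theorem NonPar.left {f g : W} (h : NonPar f g) : f.1 ≠ 0 := fun h0 => by
  have := (h 1 0 (by simp [h0])).1
  norm_num at this

theorem NonPar.right {f g : W} (h : NonPar f g) : g.1 ≠ 0 := fun h0 => by
  have := (h 0 1 (by simp [h0])).2
  norm_num at this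

theorem NonPar.dual {f g : W} (h : NonPar f g) :
    ∃ u v : E, f.1 ⬝ᵥ u = 1 ∧ g.1 ⬝ᵥ u = 0 ∧ f.1 ⬝ᵥ v = 0 ∧ g.1 ⬝ᵥ v = 1 := by
  set A := f.1 ⬝ᵥ f.1 with hA
  set B := f.1 ⬝ᵥ g.1 with hB
  set C := g.1 ⬝ᵥ g.1 with hC
  have hB' : g.1 ⬝ᵥ f.1 = B := dotProduct_comm _ _
  have hCpos : 0 < C := dot_self_pos h.right
  have hΔ : A * C - B * B ≠ 0 := by
    intro h0
    have h1 : (C • f.1 + (-B) • g.1) ⬝ᵥ (C • f.1 + (-B) • g.1) = 0 := by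
      simp only [dotProduct_add, add_dotProduct, dotProduct_smul, smul_dotProduct, smul_eq_mul, ← hA, ← hB, ← hC, hB']
      linear_combination C * h0
    have := (h _ _ (dotProduct_self_eq_zero.1 h1)).1
    exact hCpos.ne' this
  refine ⟨(A * C - B * B)⁻¹ • (C • f.1 + (-B) • g.1), (A * C - B * B)⁻¹ • (A • g.1 + (-B) • f.1), ?_, ?_, ?_, ?_⟩ <;>
    simp only [dotProduct_add, dotProduct_smul, smul_eq_mul, ← hA, ← hB, ← hC, hB']
  · linear_combination mul_inv_cancel₀ hΔ
  · ring
  · ring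
  · linear_combination mul_inv_cancel₀ hΔ

theorem nonneg_of_eps {a b : ℝ} (h : ∀ ε > 0, 0 < a + ε * b) : 0 ≤ a := by
  by_contra! hn
  have h1 : 0 < -a / (|b| + 1) := by have := abs_nonneg b; apply div_pos <;> linarith
  have h2 := h _ h1
  have h3 : -a / (|b| + 1) * (|b| + 1) = -a := by
    have := abs_nonneg b
    field_simp
  nlinarith [le_abs_self b]

theorem col_sound {f g q : W} (hn : NonPar f g) (hq : q.1 ≠ 0) (h : Col (Hs f) (Hs g) (Hs q)) :
    ∃ α β : ℝ, 0 ≤ α ∧ 0 ≤ β ∧ q = α • f + β • g := by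
  obtain ⟨h1, h2⟩ := h
  rw [Hs_compl hn.left, Hs_compl hn.right, Hs_compl hq] at h2
  obtain ⟨u, v, fu, gu, fv, gv⟩ := hn.dual
  have key : ∀ x, 0 ≤ ev f x → 0 ≤ ev g x → 0 ≤ ev q x := by
    intro x hf hg
    refine nonneg_of_eps (b := q.1 ⬝ᵥ (u + v)) fun ε hε => ?_
    rw [← ev_add_smul]
    refine h1 ⟨?_, ?_⟩
    · show 0 < ev f _
      rw [ev_add_smul, dotProduct_add, fu, fv]; linarith
    · show 0 < ev g _
      rw [ev_add_smul, dotProduct_add, gu, gv]; linarith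
  have key2 : ∀ x, ev f x ≤ 0 → ev g x ≤ 0 → ev q x ≤ 0 := by
    intro x hf hg
    rw [← neg_nonneg]
    refine nonneg_of_eps (b := q.1 ⬝ᵥ (u + v)) fun ε hε => ?_
    have : -ev q x + ε * (q.1 ⬝ᵥ (u + v)) = ev (-q) (x + (-ε) • (u + v)) := by
      rw [ev_neg, ev_add_smul]; ring
    rw [this]
    refine h2 ⟨?_, ?_⟩
    · show 0 < ev (-f) _
      rw [ev_neg, ev_add_smul, dotProduct_add, fu, fv]; linarith
    · show 0 < ev (-g) _
      rw [ev_neg, ev_add_smul, dotProduct_add, gu, gv]; linarith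
  set o : E := (-f.2) • u + (-g.2) • v with ho
  have hfo : ev f o = 0 := by
    simp [ev, ho, dotProduct_add, dotProduct_smul, fu, fv]
  have hgo : ev g o = 0 := by
    simp [ev, ho, dotProduct_add, dotProduct_smul, gu, gv]
  have hqo : ev q o = 0 := le_antisymm (key2 o hfo.le hgo.le) (key o hfo.ge hgo.ge)
  have ker : ∀ x, f.1 ⬝ᵥ x = 0 → g.1 ⬝ᵥ x = 0 → q.1 ⬝ᵥ x = 0 := by
    intro x hf hg
    have e1 : ev f (o + (1:ℝ) • x) = 0 := by rw [ev_add_smul, hfo, hf]; simp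
    have e2 : ev g (o + (1:ℝ) • x) = 0 := by rw [ev_add_smul, hgo, hg]; simp
    have e3 := le_antisymm (key2 _ e1.le e2.le) (key _ e1.ge e2.ge)
    rw [ev_add_smul, hqo] at e3
    linarith
  have full : ∀ y, q.1 ⬝ᵥ y = (q.1 ⬝ᵥ u) * (f.1 ⬝ᵥ y) + (q.1 ⬝ᵥ v) * (g.1 ⬝ᵥ y) := by
    intro y
    have := ker (y + (-(f.1 ⬝ᵥ y)) • u + (-(g.1 ⬝ᵥ y)) • v)
      (by simp only [dotProduct_add, dotProduct_smul, fu, fv, smul_eq_mul]; ring)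
      (by simp only [dotProduct_add, dotProduct_smul, gu, gv, smul_eq_mul]; ring)
    simp only [dotProduct_add, dotProduct_smul, smul_eq_mul] at this
    linarith
  refine ⟨q.1 ⬝ᵥ u, q.1 ⬝ᵥ v, ?_, ?_, ?_⟩
  · have := key (o + (1:ℝ) • u) (by rw [ev_add_smul, hfo, fu]; norm_num) (by rw [ev_add_smul, hgo, gu]; norm_num)
    rw [ev_add_smul, hqo] at this
    linarith
  · have := key (o + (1:ℝ) • v) (by rw [ev_add_smul, hfo, fv]; norm_num) (by rw [ev_add_smul, hgo, gv]; norm_num)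
    rw [ev_add_smul, hqo] at this
    linarith
  · have e1 : q.1 = (q.1 ⬝ᵥ u) • f.1 + (q.1 ⬝ᵥ v) • g.1 := by
      ext i
      have := full (Pi.single i 1)
      simpa [dotProduct_single] using this
    have e2 : q.2 = (q.1 ⬝ᵥ u) * f.2 + (q.1 ⬝ᵥ v) * g.2 := by
      have h3 : q.1 ⬝ᵥ o + q.2 = 0 := hqo
      rw [ho, dotProduct_add, dotProduct_smul, dotProduct_smul] at h3
      simp only [smul_eq_mul] at h3
      linarith
    exact Prod.ext e1 e2

theorem ev_add (f g : W) (x : E) : ev (f + g) x = ev f x + ev g x := by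
  simp [ev, add_dotProduct]; ring

theorem ev_smul (t : ℝ) (f : W) (x : E) : ev (t • f) x = t * ev f x := by
  simp [ev, smul_dotProduct]; ring

theorem Hs_smul {t : ℝ} (ht : 0 < t) (f : W) : Hs (t • f) = Hs f := by
  ext x
  simp [Hs, ev_smul, ht]

theorem col_complete {f g : W} (hn : NonPar f g) (h : (f + g).1 ≠ 0) : Col (Hs f) (Hs g) (Hs (f + g)) := by
  refine ⟨?_, ?_⟩
  · rintro x ⟨h1, h2⟩
    have h1 : 0 < ev f x := h1
    have h2 : 0 < ev g x := h2
    show 0 < ev _ x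
    rw [ev_add]; linarith
  · rw [Hs_compl hn.left, Hs_compl hn.right, Hs_compl h]
    rintro x ⟨h1, h2⟩
    have h1 : 0 < ev (-f) x := h1
    have h2 : 0 < ev (-g) x := h2
    show 0 < ev _ x
    rw [ev_neg] at h1 h2 ⊢
    rw [ev_add]; linarith

/-- inclusion between half-spaces forces positively proportional linear parts -/
theorem sub_sound {f q : W} (hf : f.1 ≠ 0) (hq : q.1 ≠ 0) (h : Hs f ⊆ Hs q) :
    ∃ t : ℝ, 0 < t ∧ q.1 = t • f.1 := by
  have key : ∀ x, 0 ≤ f.1 ⬝ᵥ x → 0 ≤ q.1 ⬝ᵥ x := by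
    intro x hx
    obtain ⟨o, ho⟩ := Hs_nonempty hf
    have ho : 0 < ev f o := ho
    by_contra! hn
    have hq0 : 0 < ev q o := h ho
    have : 0 < ev q (o + (ev q o / -(q.1 ⬝ᵥ x)) • x) := by
      apply h
      show 0 < ev f _
      rw [ev_add_smul]
      have : 0 ≤ ev q o / -(q.1 ⬝ᵥ x) := by
        apply div_nonneg <;> linarith
      have := mul_nonneg this hx
      linarith
    rw [ev_add_smul] at this
    have h3 : ev q o / -(q.1 ⬝ᵥ x) * (q.1 ⬝ᵥ x) = - ev q o := by
      rw [div_neg, neg_mul, div_mul_cancel₀ _ hn.ne]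
    linarith
  have hA := dot_self_pos hf
  have h1 : q.1 = ((q.1 ⬝ᵥ f.1) / (f.1 ⬝ᵥ f.1)) • f.1 := by
    set t := (q.1 ⬝ᵥ f.1) / (f.1 ⬝ᵥ f.1) with ht
    have h0 : f.1 ⬝ᵥ (q.1 - t • f.1) = 0 := by
      rw [dotProduct_sub, dotProduct_smul, smul_eq_mul, ht, div_mul_cancel₀ _ hA.ne', dotProduct_comm, sub_self]
    have h2 := key (-(q.1 - t • f.1)) (by rw [dotProduct_neg, h0]; simp)
    have h3 : (q.1 - t • f.1) ⬝ᵥ (q.1 - t • f.1) ≤ 0 := by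
      rw [sub_dotProduct, smul_dotProduct, h0]
      rw [dotProduct_neg] at h2
      simp only [smul_eq_mul, mul_zero, sub_zero]
      linarith
    by_contra hne
    have := dot_self_pos (sub_ne_zero.2 hne)
    linarith
  refine ⟨_, ?_, h1⟩
  have h2 : 0 ≤ (q.1 ⬝ᵥ f.1) / (f.1 ⬝ᵥ f.1) := div_nonneg (key _ hA.le) hA.le
  refine lt_of_le_of_ne h2 fun h3 => hq ?_
  rw [h1, ← h3, zero_smul]

/-! ### elements definable from the standard frame -/

abbrev J := Fin 3 × Bool

/-- coordinate functionals and the constant functional -/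
def e (i : Fin 3) : W := (Pi.single i 1, 0)
def u : W := (0, 1)

def RatW (w : W) : Prop := (∀ i, ∃ q : ℚ, w.1 i = q) ∧ ∃ q : ℚ, w.2 = q

theorem RatW.add {f g : W} (hf : RatW f) (hg : RatW g) : RatW (f + g) := by
  refine ⟨fun i => ?_, ?_⟩
  · obtain ⟨a, ha⟩ := hf.1 i
    obtain ⟨b, hb⟩ := hg.1 i
    exact ⟨a + b, by simp [ha, hb]⟩
  · obtain ⟨a, ha⟩ := hf.2
    obtain ⟨b, hb⟩ := hg.2
    exact ⟨a + b, by simp [ha, hb]⟩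

theorem RatW.smul {f : W} (hf : RatW f) (t : ℚ) : RatW ((t : ℝ) • f) := by
  refine ⟨fun i => ?_, ?_⟩
  · obtain ⟨a, ha⟩ := hf.1 i
    exact ⟨t * a, by simp [ha]⟩
  · obtain ⟨a, ha⟩ := hf.2
    exact ⟨t * a, by simp [ha]⟩

theorem RatW.inROQ {f : W} (hf : RatW f) (h0 : f.1 ≠ 0) : InROQ 3 (Hs f) := by
  obtain ⟨h1, d, hd⟩ := hf
  choose c hc using h1
  refine .halfspace _ ⟨-c, d, ?_, ?_⟩
  · intro h
    apply h0
    ext i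
    have : c i = 0 := by simpa using congrFun h i
    rw [hc, this]; simp
  · ext x
    have : ev f x = d - ∑ i, (((-c) i : ℚ) : ℝ) * x i := by
      simp [ev, dotProduct, hc, hd]; ring
    show 0 < ev f x ↔ _
    rw [this]
    exact sub_pos

theorem ratE (i : Fin 3) : RatW (e i) :=
  ⟨fun j => ⟨if j = i then 1 else 0, by simp only [e, Pi.single_apply]; split_ifs <;> simp⟩, 0, by simp [e]⟩

theorem ratU : RatW u := ⟨fun j => ⟨0, by simp [u]⟩, 1, by simp [u]⟩

/-- the frame functionals: `x_i` and `x_i - 1` -/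
def fr (j : J) : W := e j.1 + ((if j.2 then (-1 : ℚ) else 0 : ℚ) : ℝ) • u

theorem fr_ne (j : J) : (fr j).1 ≠ 0 := fun h => by
  have := congrFun h j.1
  simp [fr, e, u] at this

theorem ratFr (j : J) : RatW (fr j) := (ratE _).add (ratU.smul _)

def F0 (j : J) : M := ⟨Hs (fr j), (ratFr j).inROQ (fr_ne j)⟩

def Dn (p : Set E) : Prop := ∃ (hp : InROQ 3 p) (R : (J → M) → M → Prop),
  Dfn (fun v : Option J → M => R (fun i => v (some i)) (v none)) ∧ R F0 ⟨p, hp⟩ ∧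
  ∀ (σ : E ≃ᵃ[ℝ] E) (F : J → M) (h : M), (∀ j, (F j).1 = σ ⁻¹' (F0 j).1) → R F h → h.1 = σ ⁻¹' p

theorem comb (Rel : Set E → Set E → Set E → Set E → Set E → Prop)
    (hdef : ∀ {α : Type} (i j k l m : α), Dfn (fun v => Rel (v i).1 (v j).1 (v k).1 (v l).1 (v m).1))
    (hinv : ∀ (σ : E ≃ᵃ[ℝ] E) (a b c d h), Rel a b c d h →
      Rel (σ ⁻¹' a) (σ ⁻¹' b) (σ ⁻¹' c) (σ ⁻¹' d) (σ ⁻¹' h))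
    {p1 p2 p3 p4 p : Set E} (h1 : Dn p1) (h2 : Dn p2) (h3 : Dn p3) (h4 : Dn p4)
    (hp : InROQ 3 p) (hR : Rel p1 p2 p3 p4 p) (hU : ∀ h, Rel p1 p2 p3 p4 h → h = p) : Dn p := by
  obtain ⟨q1, R1, d1, c1, s1⟩ := h1
  obtain ⟨q2, R2, d2, c2, s2⟩ := h2
  obtain ⟨q3, R3, d3, c3, s3⟩ := h3
  obtain ⟨q4, R4, d4, c4, s4⟩ := h4
  have aux : ∀ {R : (J → M) → M → Prop}, Dfn (fun v : Option J → M => R (fun i => v (some i)) (v none)) →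
      ∀ {β : Type} (g : J → β) (b : β), Dfn (fun v : β → M => R (fun j => v (g j)) (v b)) := by
    intro R hd β g b
    exact hd.comp (fun o : Option J => o.elim b g)
  refine ⟨hp, fun F h => ∃ a b c d : M, R1 F a ∧ R2 F b ∧ R3 F c ∧ R4 F d ∧ Rel a.1 b.1 c.1 d.1 h.1,
    ?_, ?_, ?_⟩
  · refine Dfn.ex (Dfn.ex (Dfn.ex (Dfn.ex ?_)))
    exact (aux d1 _ _).and ((aux d2 _ _).and ((aux d3 _ _).and ((aux d4 _ _).and (hdef _ _ _ _ _))))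
  · exact ⟨⟨p1, q1⟩, ⟨p2, q2⟩, ⟨p3, q3⟩, ⟨p4, q4⟩, c1, c2, c3, c4, hR⟩
  · rintro σ F h hF ⟨a, b, c, d, ra, rb, rc, rd, hr⟩
    rw [s1 σ F a hF ra, s2 σ F b hF rb, s3 σ F c hF rc, s4 σ F d hF rd] at hr
    have := hinv σ.symm _ _ _ _ _ hr
    simp only [← Set.preimage_comp] at this
    have hid : (σ ∘ σ.symm : E → E) = id := by ext1 x; simp
    rw [hid] at this
    simp only [Set.preimage_id] at this
    rw [← hU _ this, ← Set.preimage_comp]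
    have hid : (σ.symm ∘ σ : E → E) = id := by ext1 x; simp
    rw [hid, Set.preimage_id]

theorem Dn.compl {p : Set E} (h : Dn p) : Dn (interior pᶜ) := by
  refine comb (fun a _ _ _ h => h = interior aᶜ) (fun i j k l m => dCompl _ _) ?_ h h h h
    (.compl _ h.1) rfl (fun _ h => h)
  intro σ a b c d h hh
  rw [hh, pre_int, Set.preimage_compl]

theorem Dn.inf {p q : Set E} (h : Dn p) (h' : Dn q) : Dn (p ∩ q) := by
  refine comb (fun a b _ _ h => h = a ∩ b) (fun i j k l m => dInf _ _ _) ?_ h h' h h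
    (.inf _ _ h.1 h'.1) rfl (fun _ h => h)
  intro σ a b c d h hh
  rw [hh, Set.preimage_inter]

theorem Dn.bot : Dn ∅ :=
  ⟨.bot, fun F h => h.1 = ∅, dEmpty _, rfl, fun σ F h _ hh => by rw [hh, Set.preimage_empty]⟩

theorem Dn.top : Dn Set.univ :=
  ⟨.top, fun F h => h.1 = Set.univ, dUniv _, rfl, fun σ F h _ hh => by rw [hh, Set.preimage_univ]⟩

theorem Dn.frame (j : J) : Dn (Hs (fr j)) :=
  ⟨(F0 j).2, fun F h => h.1 = (F j).1, dEq _ _, rfl, fun σ F h hF hh => by rw [hh, hF]; rfl⟩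

def D (w : W) : Prop := RatW w ∧ w.1 ≠ 0 ∧ Dn (Hs w)

theorem D.neg {w : W} (h : D w) : D (-w) := by
  have h0 : (-w).1 ≠ 0 := by simpa using h.2.1
  refine ⟨?_, h0, ?_⟩
  · have := h.1.smul (-1)
    simpa using this
  · rw [← Hs_compl h.2.1]; exact h.2.2.compl

theorem D.smul {w : W} (h : D w) {t : ℚ} (ht : t ≠ 0) : D ((t : ℝ) • w) := by
  have ht' : (t : ℝ) ≠ 0 := by exact_mod_cast ht
  refine ⟨h.1.smul t, by simpa [ht] using h.2.1, ?_⟩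
  rcases ht'.lt_or_gt with h1 | h1
  · have : (t : ℝ) • w = (-t : ℝ) • (-w) := by module
    rw [this, Hs_smul (by linarith)]
    exact h.neg.2.2
  · rw [Hs_smul h1]; exact h.2.2

theorem op1 {f g f' g' : W} (hf : D f) (hg : D g) (hf' : D f') (hg' : D g')
    (n : NonPar f g) (n' : NonPar f' g') {p : W} (hp : p = f + g) (hp' : p = f' + g')
    (hu : ∀ a b a' b' : ℝ, a • f + b • g = a' • f' + b' • g' → a = b) : D p := by
  have h0 : p.1 ≠ 0 := by
    intro h
    have := (n 1 1 (by rw [hp] at h; simpa using h)).1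
    norm_num at this
  have hr : RatW p := hp ▸ hf.1.add hg.1
  refine ⟨hr, h0, ?_⟩
  refine comb (fun a b c d h => IsHS h ∧ Col a b h ∧ Col c d h)
    (fun i j k l m => (dHS _).and ((dCol _ _ _).and (dCol _ _ _)))
    (fun σ a b c d h hh => ⟨hh.1.pre σ, hh.2.1.pre σ, hh.2.2.pre σ⟩)
    hf.2.2 hg.2.2 hf'.2.2 hg'.2.2 (hr.inROQ h0) ⟨⟨p, h0, rfl⟩, ?_, ?_⟩ ?_
  · subst hp; exact col_complete n h0
  · subst hp'; exact col_complete n' h0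
  · rintro h ⟨⟨q, q0, rfl⟩, h1, h2⟩
    obtain ⟨a, b, ha, hb, e1⟩ := col_sound n q0 h1
    obtain ⟨a', b', -, -, e2⟩ := col_sound n' q0 h2
    have hab := hu a b a' b' (e1.symm.trans e2)
    subst hab
    have hq : q = a • p := by rw [e1, hp]; module
    rcases ha.lt_or_eq with h | h
    · rw [hq, Hs_smul h]
    · exfalso; apply q0; rw [hq, ← h]; simp

theorem op2 {f g f' : W} (hf : D f) (hg : D g) (hf' : D f')
    (n : NonPar f g) {p : W} (hp : p = f + g) (t : ℝ) (hp' : p = f' + t • u) : D p := by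
  have h0 : p.1 ≠ 0 := by
    intro h
    have := (n 1 1 (by rw [hp] at h; simpa using h)).1
    norm_num at this
  have hr : RatW p := hp ▸ hf.1.add hg.1
  have hp1 : p.1 = f'.1 := by rw [hp']; simp [u]
  refine ⟨hr, h0, ?_⟩
  refine comb (fun a b c d h => IsHS h ∧ Col a b h ∧ (c ⊆ h ∨ h ⊆ c))
    (fun i j k l m => (dHS _).and ((dCol _ _ _).and ((Dfn.le _ _).or (Dfn.le _ _))))
    (fun σ a b c d h hh => ⟨hh.1.pre σ, hh.2.1.pre σ, ?_⟩)
    hf.2.2 hg.2.2 hf'.2.2 hf'.2.2 (hr.inROQ h0) ⟨⟨p, h0, rfl⟩, ?_, ?_⟩ ?_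
  · exact hh.2.2.imp (fun h => Set.preimage_mono h) (fun h => Set.preimage_mono h)
  · subst hp; exact col_complete n h0
  · have hev : ∀ x, ev p x = ev f' x + t := by
      intro x; rw [hp', ev_add, ev_smul]; simp [ev, u]
    rcases le_total 0 t with ht | ht
    · left
      intro x (hx : 0 < ev f' x)
      show 0 < ev p x
      rw [hev]; linarith
    · right
      intro x (hx : 0 < ev p x)
      show 0 < ev f' x
      rw [hev] at hx; linarith
  · rintro h ⟨⟨q, q0, rfl⟩, h1, h2⟩
    obtain ⟨a, b, ha, hb, e1⟩ := col_sound n q0 h1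
    have : ∃ s : ℝ, 0 < s ∧ q.1 = s • p.1 := by
      rw [hp1]
      rcases h2 with h2 | h2
      · exact sub_sound hf'.2.1 q0 h2
      · obtain ⟨s, hs, e3⟩ := sub_sound q0 hf'.2.1 h2
        exact ⟨s⁻¹, by positivity, by rw [e3, smul_smul, inv_mul_cancel₀ hs.ne', one_smul]⟩
    obtain ⟨s, hs, e2⟩ := this
    have e3 : (a - s) • f.1 + (b - s) • g.1 = 0 := by
      have h3 : q.1 = a • f.1 + b • g.1 := by rw [e1]; rfl
      have h4 : p.1 = f.1 + g.1 := by rw [hp]; rfl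
      rw [h4, h3] at e2
      have : (a - s) • f.1 + (b - s) • g.1 = (a • f.1 + b • g.1) - s • (f.1 + g.1) := by module
      rw [this, e2, sub_self]
    obtain ⟨ea, eb⟩ := n _ _ e3
    have ea : a = s := by linarith
    have eb : b = s := by linarith
    have hq : q = s • p := by rw [e1, hp, ea, eb]; module
    rw [hq, Hs_smul hs]

theorem nonPar_of {f g : W} (i j : Fin 3) (h : f.1 i * g.1 j - f.1 j * g.1 i ≠ 0) : NonPar f g := by
  intro a b hab
  have h1 : a * f.1 i + b * g.1 i = 0 := by simpa using congrFun hab i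
  have h2 : a * f.1 j + b * g.1 j = 0 := by simpa using congrFun hab j
  constructor
  · have : a * (f.1 i * g.1 j - f.1 j * g.1 i) = 0 := by linear_combination g.1 j * h1 - g.1 i * h2
    exact (mul_eq_zero.1 this).resolve_right h
  · have : b * (f.1 i * g.1 j - f.1 j * g.1 i) = 0 := by linear_combination f.1 i * h2 - f.1 j * h1
    exact (mul_eq_zero.1 this).resolve_right h

@[simp] theorem e_self (i : Fin 3) : (e i).1 i = 1 := by simp [e]
theorem e_ne {i j : Fin 3} (h : j ≠ i) : (e i).1 j = 0 := by simp [e, h]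
@[simp] theorem e_snd (i : Fin 3) : (e i).2 = 0 := rfl
@[simp] theorem u_fst : u.1 = 0 := rfl
@[simp] theorem u_snd : u.2 = 1 := rfl

theorem D0 (i : Fin 3) : D (e i) := by
  have h : fr (i, false) = e i := by simp [fr]
  exact h ▸ ⟨ratFr _, fr_ne _, Dn.frame _⟩

theorem Dm1 (i : Fin 3) : D (e i - u) := by
  have h : fr (i, true) = e i - u := by simp [fr]; module
  exact h ▸ ⟨ratFr _, fr_ne _, Dn.frame _⟩

theorem d_axis_mul {i j : Fin 3} (hij : i ≠ j) {n : ℚ} (hn : n ≠ 0) (h : D (e j - (n : ℝ) • u)) :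
    D ((n : ℝ) • e i - e j) := by
  have hn' : (n : ℝ) ≠ 0 := by exact_mod_cast hn
  refine op1 ((D0 i).smul hn) (D0 j).neg ((Dm1 i).smul hn) h.neg (nonPar_of i j ?_) (nonPar_of i j ?_)
    (by module) (by module) ?_
  · simp [e_ne hij, e_ne hij.symm, hn]
  · simp [e_ne hij, e_ne hij.symm, hn]
  · intro a b a' b' hh
    have h1 := congrFun (congrArg Prod.fst hh) i
    have h2 := congrFun (congrArg Prod.fst hh) j
    have h3 := congrArg Prod.snd hh
    simp [e_ne hij, e_ne hij.symm, hn] at h1 h2 h3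
    rw [h1, h2]
    have : (a' - b') * (n : ℝ) = 0 := by linarith
    have := (mul_eq_zero.1 this).resolve_right hn'
    linarith

theorem d_diff {i j : Fin 3} (hij : i ≠ j) : D (e i - e j) := by
  have := d_axis_mul hij (n := 1) one_ne_zero (by simpa using Dm1 j)
  simpa using this

theorem d_diff1 {i j : Fin 3} (hij : i ≠ j) : D (e i - e j - u) := by
  refine op2 (Dm1 i) (D0 j).neg (d_diff hij) (nonPar_of i j ?_) (by module) (-1) (by module)
  simp [e_ne hij, e_ne hij.symm]

theorem d_swap {i j : Fin 3} (hij : i ≠ j) {c : ℝ} (h : D (e i - c • u)) : D (e j - c • u) := by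
  refine op2 h (d_diff hij).neg (D0 j) (nonPar_of i j ?_) (by module) (-c) (by module)
  simp [e_ne hij, e_ne hij.symm]

theorem d_succ {i j : Fin 3} (hij : i ≠ j) {c : ℝ} (h : D (e i - c • u)) : D (e i - (c + 1) • u) := by
  refine op2 (d_diff1 hij) (d_swap hij h) (D0 i) (nonPar_of i j ?_) (by module) (-(c + 1)) (by module)
  simp [e_ne hij, e_ne hij.symm]

theorem d_pred {i j : Fin 3} (hij : i ≠ j) {c : ℝ} (h : D (e i - c • u)) : D (e i - (c - 1) • u) := by
  refine d_swap hij.symm ?_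
  refine op2 h (d_diff1 hij).neg (D0 j) (nonPar_of i j ?_) (by module) (-(c - 1)) (by module)
  simp [e_ne hij, e_ne hij.symm]

theorem exists_ne' (i : Fin 3) : ∃ j, i ≠ j := ⟨i + 1, by decide +revert⟩

theorem d_int (i : Fin 3) (n : ℤ) : D (e i - (n : ℝ) • u) := by
  obtain ⟨j, hij⟩ := exists_ne' i
  induction n using Int.induction_on with
  | zero => simpa using D0 i
  | succ n ih => push_cast at ih ⊢; exact d_succ hij ih
  | pred n ih => push_cast at ih ⊢; exact d_pred hij ih

theorem d_rat (i : Fin 3) (q : ℚ) : D (e i + (q : ℝ) • u) := by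
  obtain ⟨j, hij⟩ := exists_ne' i
  have hd : ((q.den : ℤ) : ℚ) ≠ 0 := by exact_mod_cast q.den_nz
  have hd' : ((q.den : ℤ) : ℝ) ≠ 0 := by exact_mod_cast q.den_nz
  have h1 := d_axis_mul hij hd (by simpa using d_int j q.den)
  have h2 := d_int j (-q.num)
  have hq : (q : ℝ) * ((q.den : ℤ) : ℝ) = q.num := by
    exact_mod_cast Rat.mul_den_eq_num q
  have h3 : D ((((q.den : ℤ) : ℚ) : ℝ) • e i + (q.num : ℝ) • u) := by
    refine op2 h1 h2 ((D0 i).smul hd) (nonPar_of i j ?_) ?_ q.num rfl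
    · simp [e_ne hij, e_ne hij.symm]
    · push_cast; module
  have h4 := h3.smul (inv_ne_zero hd)
  have : (((((q.den : ℤ) : ℚ)⁻¹ : ℚ) : ℝ)) • ((((q.den : ℤ) : ℚ) : ℝ) • e i + (q.num : ℝ) • u) = e i + (q : ℝ) • u := by
    rw [← hq, smul_add, smul_smul, smul_smul]
    push_cast at hd' ⊢
    congr 2
    · rw [inv_mul_cancel₀ hd', one_smul]
    · field_simp
  rwa [this] at h4

theorem d_one (i : Fin 3) {a : ℚ} (ha : a ≠ 0) (d : ℚ) : D ((a : ℝ) • e i + (d : ℝ) • u) := by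
  have := (d_rat i (d / a)).smul ha
  have ha' : (a : ℝ) ≠ 0 := by exact_mod_cast ha
  have h : (a : ℝ) • (e i + ((d / a : ℚ) : ℝ) • u) = (a : ℝ) • e i + (d : ℝ) • u := by
    rw [smul_add, smul_smul]
    congr 2
    push_cast; field_simp
  rwa [h] at this

theorem d_two {i j : Fin 3} (hij : i ≠ j) {a b : ℚ} (ha : a ≠ 0) (hb : b ≠ 0) (d : ℚ) :
    D ((a : ℝ) • e i + (b : ℝ) • e j + (d : ℝ) • u) := by
  have ha' : (a : ℝ) ≠ 0 := by exact_mod_cast ha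
  have hb' : (b : ℝ) ≠ 0 := by exact_mod_cast hb
  refine op1 (d_one i ha d) (d_one j hb 0) (d_one i ha (d + 1)) (d_one j hb (-1)) (nonPar_of i j ?_)
    (nonPar_of i j ?_) (by push_cast; module) (by push_cast; module) ?_
  · simp [e_ne hij, e_ne hij.symm, ha, hb]
  · simp [e_ne hij, e_ne hij.symm, ha, hb]
  · intro x y x' y' hh
    have h1 := congrFun (congrArg Prod.fst hh) i
    have h2 := congrFun (congrArg Prod.fst hh) j
    have h3 := congrArg Prod.snd hh
    simp [e_ne hij, e_ne hij.symm, ha, hb] at h1 h2 h3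
    subst h1 h2
    linarith

theorem d_three {i j k : Fin 3} (hij : i ≠ j) (hik : i ≠ k) (hjk : j ≠ k) {a b c : ℚ} (ha : a ≠ 0) (hb : b ≠ 0)
    (hc : c ≠ 0) (d : ℚ) :
    D ((a : ℝ) • e i + (b : ℝ) • e j + (c : ℝ) • e k + (d : ℝ) • u) := by
  have ha' : (a : ℝ) ≠ 0 := by exact_mod_cast ha
  have hb' : (b : ℝ) ≠ 0 := by exact_mod_cast hb
  refine op1 (d_two hij ha hb d) ((D0 k).smul hc) (d_two hik ha hc d) ((D0 j).smul hb) (nonPar_of i k ?_)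
    (nonPar_of i j ?_) (by module) (by module) ?_
  · simp [e_ne hij, e_ne hij.symm, e_ne hik, e_ne hik.symm, e_ne hjk, e_ne hjk.symm, ha, hc]
  · simp [e_ne hij, e_ne hij.symm, e_ne hik, e_ne hik.symm, e_ne hjk, e_ne hjk.symm, ha, hb]
  · intro x y x' y' hh
    have h1 := congrFun (congrArg Prod.fst hh) i
    have h2 := congrFun (congrArg Prod.fst hh) k
    simp [e_ne hij, e_ne hij.symm, e_ne hik, e_ne hik.symm, e_ne hjk, e_ne hjk.symm, ha, hc] at h1 h2
    rw [h1, h2]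

theorem d_all (c : Fin 3 → ℚ) (hc : c ≠ 0) (d : ℚ) :
    D ((c 0 : ℝ) • e 0 + (c 1 : ℝ) • e 1 + (c 2 : ℝ) • e 2 + (d : ℝ) • u) := by
  have h01 : (0 : Fin 3) ≠ 1 := by decide
  have h02 : (0 : Fin 3) ≠ 2 := by decide
  have h12 : (1 : Fin 3) ≠ 2 := by decide
  by_cases h0 : c 0 = 0 <;> by_cases h1 : c 1 = 0 <;> by_cases h2 : c 2 = 0
  · exfalso; apply hc; ext i; fin_cases i <;> simpa
  · simpa [h0, h1] using d_one 2 h2 d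
  · simpa [h0, h2] using d_one 1 h1 d
  · simpa [h0] using d_two h12 h1 h2 d
  · simpa [h1, h2] using d_one 0 h0 d
  · simpa [h1] using d_two h02 h0 h2 d
  · simpa [h2] using d_two h01 h0 h1 d
  · exact d_three h01 h02 h12 h0 h1 h2 d

theorem dn_all {p : Set E} (h : InROQ 3 p) : Dn p := by
  induction h with
  | bot => exact .bot
  | top => exact .top
  | halfspace s hs =>
    obtain ⟨c, d, hc, rfl⟩ := hs
    have := (d_all (-c) (by simpa using hc) d).2.2
    convert this using 1
    ext x
    simp [Hs, ev, e, u, dotProduct, Fin.sum_univ_three, Pi.single_apply]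
    constructor <;> intro h <;> linarith
  | inf s t _ _ h1 h2 => exact h1.inf h2
  | sup s t _ _ h1 h2 =>
    have := (h1.compl.inf h2.compl).compl
    rwa [← interior_inter, ← Set.compl_union, ← closure_compl, compl_compl] at this
  | compl s _ h => exact h.compl

/-! ### definable frames -/

def Oct (b : Bool) (a : Set E) : Set E := cond b a (interior aᶜ)

theorem dOct (b : Bool) (i j : α) : Dfn (fun v => (v j).1 ⊆ Oct b (v i).1) := by
  cases b
  · refine Dfn.congr (Dfn.ex (R := fun v y => y.1 = interior (v i).1ᶜ ∧ (v j).1 ⊆ y.1)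
      ((dCompl _ _).and (Dfn.le _ _))) fun v => ?_
    exact ⟨fun ⟨y, h1, h2⟩ => h2.trans h1.subset, fun h => ⟨⟨_, .compl _ (v i).2⟩, rfl, h⟩⟩
  · exact Dfn.le _ _

def Frame (F : J → M) : Prop :=
  (∀ j, IsHS (F j).1) ∧
  (∀ i : Fin 3, (F (i, true)).1 ⊆ (F (i, false)).1 ∧ ¬ (F (i, false)).1 ⊆ (F (i, true)).1) ∧
  (∀ s : Fin 3 → Bool, ∃ y : M, ¬ y.1 = ∅ ∧ ∀ i, y.1 ⊆ Oct (s i) (F (i, false)).1)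

theorem dFrame (g : J → α) : Dfn (fun v : α → M => Frame (fun j => v (g j))) := by
  refine (Dfn.forallFin fun j => dHS _).and ((Dfn.forallFin fun i => (Dfn.le _ _).and (Dfn.le _ _).not).and
    (Dfn.forallFin fun s => Dfn.ex ((dEmpty _).not.and (Dfn.forallFin fun i => dOct _ _ _))))

theorem frame_F0 : Frame F0 := by
  have hev : ∀ j x, ev (fr j) x = x j.1 + (if j.2 then (-1 : ℝ) else 0) := by
    intro j x
    simp only [fr, ev_add, ev_smul]
    simp [ev, e, u]
    split_ifs <;> simp
  refine ⟨fun j => ⟨fr j, fr_ne j, rfl⟩, fun i => ⟨?_, ?_⟩, fun s => ?_⟩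
  · intro x hx
    have hx : 0 < ev (fr (i, true)) x := hx
    show 0 < ev (fr (i, false)) x
    rw [hev] at hx ⊢
    simp at hx ⊢
    linarith
  · intro h
    have h1 : (fun _ => 1 : E) ∈ Hs (fr (i, false)) := by
      show 0 < ev _ _
      rw [hev]; simp
    have h2 : 0 < ev (fr (i, true)) (fun _ => 1) := h h1
    rw [hev] at h2
    simp at h2
  · have hO : ∀ i, InROQ 3 (Oct (s i) (F0 (i, false)).1) := by
      intro i
      cases s i
      · exact .compl _ (F0 _).2
      · exact (F0 _).2
    refine ⟨⟨_, .inf _ _ (.inf _ _ (hO 0) (hO 1)) (hO 2)⟩, ?_, ?_⟩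
    · have key : ∀ i, (fun i => if s i then 1 else -1 : E) ∈ Oct (s i) (F0 (i, false)).1 := by
        intro i
        by_cases hs : s i
        · rw [hs]
          show 0 < ev (fr (i, false)) _
          rw [hev]; simp [hs]
        · have hs : s i = false := by simpa using hs
          rw [hs]
          show _ ∈ interior (Hs _)ᶜ
          rw [Hs_compl (fr_ne _)]
          show 0 < ev _ _
          rw [ev_neg, hev]; simp [hs]
      exact Set.nonempty_iff_ne_empty.1 ⟨_, ⟨key 0, key 1⟩, key 2⟩
    · intro i x hx
      obtain ⟨⟨h0, h1⟩, h2⟩ := hx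
      fin_cases i
      exacts [h0, h1, h2]

theorem det_aux {f : Fin 3 → W} (h : ∀ s : Fin 3 → Bool, ∃ x, ∀ i,
      (s i = true → 0 < ev (f i) x) ∧ (s i = false → ev (f i) x < 0))
    {g : Fin 3 → ℝ} (hg : g ≠ 0) (h0 : ∑ i, g i • (f i).1 = 0) (hk : 0 ≤ ∑ i, g i * (f i).2) : False := by
  obtain ⟨x, hx⟩ := h (fun i => decide (g i < 0))
  have e1 : ∑ i, g i * ev (f i) x = ∑ i, g i * (f i).2 := by
    have : (∑ i, g i • (f i).1) ⬝ᵥ x = 0 := by rw [h0, zero_dotProduct]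
    rw [sum_dotProduct] at this
    simp only [smul_dotProduct, smul_eq_mul] at this
    simp only [ev, mul_add, Finset.sum_add_distrib, this, zero_add]
  have e2 : ∑ i, g i * ev (f i) x < 0 := by
    obtain ⟨j, hj⟩ := Function.ne_iff.1 hg
    have hlt : ∀ i, g i ≠ 0 → g i * ev (f i) x < 0 := by
      intro i hi
      rcases hi.lt_or_gt with h1 | h1
      · exact mul_neg_of_neg_of_pos h1 ((hx i).1 (by simpa using h1))
      · exact mul_neg_of_pos_of_neg h1 ((hx i).2 (by simpa using le_of_lt h1))
    refine Finset.sum_neg' (fun i _ => ?_) ⟨j, Finset.mem_univ _, hlt j hj⟩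
    by_cases hi : g i = 0
    · simp [hi]
    · exact (hlt i hi).le
  linarith

theorem frame_sound {F : J → M} (h : Frame F) :
    ∃ σ : E ≃ᵃ[ℝ] E, ∀ j, (F j).1 = σ ⁻¹' (F0 j).1 := by
  obtain ⟨h1, h2, h3⟩ := h
  have : ∀ i, ∃ f : W, f.1 ≠ 0 ∧ (F (i, false)).1 = Hs f ∧ (F (i, true)).1 = Hs (f - u) := by
    intro i
    obtain ⟨w, w0, hw⟩ := h1 (i, false)
    obtain ⟨v, v0, hv⟩ := h1 (i, true)
    have h2 := h2 i
    rw [hw, hv] at h2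
    obtain ⟨t, ht, e1⟩ := sub_sound v0 w0 h2.1
    have hδ : 0 < w.2 - t * v.2 := by
      by_contra! hn
      apply h2.2
      rw [← Hs_smul ht v]
      intro x hx
      have hx : 0 < w.1 ⬝ᵥ x + w.2 := hx
      show 0 < (t • v.1) ⬝ᵥ x + t * v.2
      rw [← e1]; linarith
    refine ⟨(w.2 - t * v.2)⁻¹ • w, ?_, ?_, ?_⟩
    · simpa [hδ.ne'] using w0
    · rw [hw, Hs_smul (inv_pos.2 hδ)]
    · rw [hv, ← Hs_smul (mul_pos (inv_pos.2 hδ) ht)]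
      congr 1
      refine Prod.ext ?_ ?_
      · simp [e1, smul_smul]
      · simp
        field_simp
        ring
  choose f f0 hf hf' using this
  have oct : ∀ s : Fin 3 → Bool, ∃ x, ∀ i,
      (s i = true → 0 < ev (f i) x) ∧ (s i = false → ev (f i) x < 0) := by
    intro s
    obtain ⟨y, hy, hs⟩ := h3 s
    obtain ⟨x, hx⟩ := Set.nonempty_iff_ne_empty.2 hy
    refine ⟨x, fun i => ⟨fun h => ?_, fun h => ?_⟩⟩
    · have := hs i hx
      rw [h, hf i] at this
      exact this
    · have := hs i hx
      rw [h, hf i] at this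
      have : x ∈ interior (Hs (f i))ᶜ := this
      rw [Hs_compl (f0 i)] at this
      have : 0 < ev (- f i) x := this
      rw [ev_neg] at this
      linarith
  let C : Matrix (Fin 3) (Fin 3) ℝ := Matrix.of fun i => (f i).1
  have hdet : C.det ≠ 0 := by
    intro h0
    obtain ⟨g, hg, hgC⟩ := Matrix.exists_vecMul_eq_zero_iff.2 h0
    have hs : ∑ i, g i • (f i).1 = 0 := by
      ext k
      have := congrFun hgC k
      simpa [Matrix.vecMul, dotProduct, C, Finset.sum_apply] using this
    rcases le_total 0 (∑ i, g i * (f i).2) with h | h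
    · exact det_aux oct hg hs h
    · refine det_aux oct (neg_ne_zero.2 hg) ?_ ?_
      · simp [hs]
      · simpa using h
  let L : E ≃ₗ[ℝ] E := Matrix.toLinearEquiv' C (C.invertibleOfIsUnitDet (isUnit_iff_ne_zero.2 hdet))
  let σ : E ≃ᵃ[ℝ] E := L.toAffineEquiv.trans (AffineEquiv.constVAdd ℝ E (fun i => (f i).2))
  have hσ : ∀ x i, σ x i = ev (f i) x := by
    intro x i
    show (f i).2 + (C.mulVec x) i = _
    rw [add_comm]; rfl
  refine ⟨σ, ?_⟩
  have hE : ∀ i x, ev (e i) (σ x) = ev (f i) x := by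
    intro i x
    rw [← hσ]
    simp [ev, e]
  rintro ⟨i, b⟩
  cases b
  · rw [hf]
    ext x
    show 0 < ev (f i) x ↔ 0 < ev (fr (i, false)) (σ x)
    simp [fr, hE]
  · rw [hf']
    ext x
    show 0 < ev (f i - u) x ↔ 0 < ev (fr (i, true)) (σ x)
    rw [sub_eq_add_neg]
    simp only [fr, ev_add, ev_smul, hE, ev_neg]
    simp [ev]

theorem isAffineEquiv_of (τ : E ≃ᵃ[ℝ] E) : IsAffineEquiv 3 τ := by
  refine ⟨LinearMap.toMatrix' τ.linear.toLinearMap, τ 0, ?_, fun x => ?_⟩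
  · rw [LinearMap.det_toMatrix']
    exact LinearEquiv.isUnit_det' _
  · rw [LinearMap.toMatrix'_mulVec]
    have := τ.map_vadd 0 x
    simpa using this

end AffC

/-- Every k-tuple of regions of ROQ(ℝ^3) satisfies an affine-complete formula in 𝔐^3:
any two k-tuples satisfying it are related by a single affine transformation of ℝ^3. -/
theorem affine_complete_formula_tuples_dim3 (k : ℕ) (hk : 1 ≤ k)
    (r : Fin k → ROQel 3) :
    ∃ φ : Lconv.Formula (Fin k),
      φ.Realize r ∧
      ∀ s s' : Fin k → ROQel 3, φ.Realize s → φ.Realize s' →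
        ∃ τ : (Fin 3 → ℝ) → (Fin 3 → ℝ), IsAffineEquiv 3 τ ∧
          ∀ i, τ '' (s i).1 = (s' i).1 := by
  choose hp R dR cR sR using fun i => AffC.dn_all (r i).2
  have hD : AffC.Dfn (fun v : Fin k → AffC.M => ∃ F : AffC.J → AffC.M, AffC.Frame F ∧ ∀ i, R i F (v i)) := by
    refine AffC.Dfn.exs (R := fun v F => AffC.Frame F ∧ ∀ i, R i F (v i)) ?_
    refine (AffC.dFrame _).and (AffC.Dfn.forallFin fun i => ?_)
    exact (dR i).comp (fun o : Option AffC.J => o.elim (Sum.inl i) Sum.inr)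
  obtain ⟨φ, hφ⟩ := hD
  refine ⟨φ, (hφ r).2 ⟨AffC.F0, AffC.frame_F0, fun i => cR i⟩, ?_⟩
  intro s s' hs hs'
  obtain ⟨F, hF, hR⟩ := (hφ s).1 hs
  obtain ⟨F', hF', hR'⟩ := (hφ s').1 hs'
  obtain ⟨σ, hσ⟩ := AffC.frame_sound hF
  obtain ⟨σ', hσ'⟩ := AffC.frame_sound hF'
  refine ⟨σ.trans σ'.symm, AffC.isAffineEquiv_of _, fun i => ?_⟩
  rw [sR i σ F _ hσ (hR i), sR i σ' F' _ hσ' (hR' i)]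
  ext x
  constructor
  · rintro ⟨y, hy, rfl⟩
    simpa using hy
  · intro hx
    exact ⟨σ.symm (σ' x), by simpa using hx, by simp⟩
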